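/- For all integers k ≥ 1 and c ≥ 2k, there exist finite simple graphs G and H and a bijection Φ from V(G) to V(H) such that d_k^G(v) = d_k^H(Φ(v)) for every vertex v of G, while ν(H) ≥ 1 and ν(G) ≥ ((c+1)/(4k)) · ν(H). -/

import Mathlib

open SimpleGraph

/-- A set of edges of `G` forming a matching: pairwise vertex-disjoint edges of `G`. -/
def IsMatchingSet {V : Type*} (G : SimpleGraph V) (M : Set (Sym2 V)) : Prop :=
  M ⊆ G.edgeSet ∧ ∀ e ∈ M, ∀ f ∈ M, e ≠ f → ∀ v : V, ¬(v ∈ e ∧ v ∈ f)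

/-- The matching number `ν(G)`: the maximum size of a matching in `G`. -/
noncomputable def matchingNumber {V : Type*} (G : SimpleGraph V) : ℕ :=
  sSup {n | ∃ M : Set (Sym2 V), IsMatchingSet G M ∧ M.ncard = n}
/-- The type of `k`-level degrees: `LD 0 = ℕ` records a plain degree (a `1`-level degree),
and a `(k+2)`-level degree is a multiset of `(k+1)`-level degrees. -/
def LD : ℕ → Type
  | 0 => ℕ
  | (k+1) => Multiset (LD k)

/-- `kdeg G k v` is the `(k+1)`-level degree `d_{k+1}^G(v)`: `kdeg G 0 v = deg_G v`, and
`kdeg G (k+1) v` is the multiset of the values `kdeg G k w` over the neighbors `w` of `v`.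
Thus for `k ≥ 1` the quantity `d_k^G(v)` of the paper is `kdeg G (k-1) v`. -/
noncomputable def kdeg {V : Type*} [Fintype V] (G : SimpleGraph V) : (k : ℕ) → V → LD k
  | 0, v => (G.neighborSet v).ncard
  | (k+1), v => ((G.neighborSet v).toFinite.toFinset.val).map (kdeg G k)

/-!
Give the vertices levels `0, …, k` so that in two graphs `G`, `H` the number of neighbours of level
at most `a ≥ 1` depends only on the level of the vertex, and agrees for all levels less than `a` and
`k`. Merging all levels up to `m` into one, the neighbours of two vertices are equidistributed as
soon as `m` exceeds both levels, so by induction on `t < k` the `(t + 1)`-level degrees agree for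
vertices of equal level and for vertices of levels less than `k - t`. Levels `0` and `1` are never
told apart, which leaves room for `G` to match the level `0` vertices among themselves while in `H`
every edge meets a vertex of positive level. If level `0` vertices are far more numerous than the
others, `ν(G)` is far larger than `ν(H)`.

For `k = 1`, `H` consists of stars, whose centres have level `1`; in `G` the leaves are matched and
the centres form a complete bipartite graph. To pass from `k` to `k + 1`, take many copies and join
all vertices of level less than `k` to a few new vertices of level `k + 1`, just enough to raise
their degrees to those of the vertices of level `k`.
-/

section Matching

variable {V W : Type*} {G : SimpleGraph V} {H : SimpleGraph W}

theorem isMatchingSet_empty : IsMatchingSet G ∅ := by simp [IsMatchingSet]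

theorem isMatchingSet_singleton {e : Sym2 V} (he : e ∈ G.edgeSet) : IsMatchingSet G {e} := by
  simpa [IsMatchingSet] using he

theorem IsMatchingSet.image {M : Set (Sym2 V)} (hM : IsMatchingSet G M) (f : Copy G H) :
    IsMatchingSet H (Sym2.map f '' M) := by
  refine ⟨?_, ?_⟩
  · rintro _ ⟨e, he, rfl⟩
    exact f.toHom.map_mem_edgeSet (hM.1 he)
  · rintro _ ⟨e, he, rfl⟩ _ ⟨e', he', rfl⟩ hne v ⟨hv, hv'⟩
    obtain ⟨x, hx, rfl⟩ := Sym2.mem_map.1 hv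
    obtain ⟨y, hy, hxy⟩ := Sym2.mem_map.1 hv'
    obtain rfl := f.injective hxy
    exact hM.2 e he e' he' (fun h => hne (congrArg _ h)) y ⟨hx, hy⟩

theorem IsMatchingSet.ncard_le_of_isVertexCover {M : Set (Sym2 V)} (hM : IsMatchingSet G M)
    {C : Set V} (hC : G.IsVertexCover C) (hfin : C.Finite) : M.ncard ≤ C.ncard := by
  have covered : ∀ e : M, ∃ v ∈ C, v ∈ e.1 := by
    rintro ⟨⟨x, y⟩, he⟩
    rcases hC (hM.1 he) with h | h
    · exact ⟨x, h, Sym2.mem_mk_left x y⟩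
    · exact ⟨y, h, Sym2.mem_mk_right x y⟩
  choose f hfC hfe using covered
  have hf : Function.Injective f := fun e e' h => by
    by_contra hne
    exact hM.2 e e.2 e' e'.2 (Subtype.coe_ne_coe.2 hne) (f e) ⟨hfe e, h ▸ hfe e'⟩
  have := hfin.to_subtype
  exact Nat.card_le_card_of_injective (fun e => (⟨f e, hfC e⟩ : C))
    fun e e' h => hf (congrArg Subtype.val h)

theorem IsMatchingSet.ncard_le_matchingNumber [Finite V] {M : Set (Sym2 V)}
    (hM : IsMatchingSet G M) : M.ncard ≤ matchingNumber G := by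
  refine le_csSup ⟨Nat.card (Sym2 V), ?_⟩ ⟨M, hM, rfl⟩
  rintro _ ⟨N, -, rfl⟩
  exact Set.ncard_le_card N

theorem matchingNumber_le {n : ℕ} (h : ∀ M, IsMatchingSet G M → M.ncard ≤ n) :
    matchingNumber G ≤ n :=
  csSup_le ⟨0, ∅, isMatchingSet_empty, Set.ncard_empty _⟩ fun _ ⟨M, hM, hn⟩ => hn ▸ h M hM

theorem matchingNumber_le_of_isContained [Finite W] (h : G ⊑ H) :
    matchingNumber G ≤ matchingNumber H := by
  obtain ⟨f⟩ := h
  refine matchingNumber_le fun M hM => ?_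
  rw [← Set.ncard_image_of_injective M (Sym2.map.injective f.injective)]
  exact (hM.image f).ncard_le_matchingNumber

theorem matchingNumber_congr [Finite V] [Finite W] (φ : G ≃g H) :
    matchingNumber G = matchingNumber H :=
  (matchingNumber_le_of_isContained ⟨φ.toCopy⟩).antisymm
    (matchingNumber_le_of_isContained ⟨φ.symm.toCopy⟩)

theorem one_le_matchingNumber [Finite V] {v w : V} (h : G.Adj v w) : 1 ≤ matchingNumber G := by
  simpa using (isMatchingSet_singleton (G := G) (e := s(v, w)) h).ncard_le_matchingNumber

theorem ncard_le_two_mul_matchingNumber [Finite V] {S : Set V}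
    (hS : ∀ v ∈ S, ∃! w, G.Adj v w ∧ w ∈ S) : S.ncard ≤ 2 * matchingNumber G := by
  classical
  have := Fintype.ofFinite V
  set M : Finset (Sym2 V) := {e | e ∈ G.edgeSet ∧ ∀ v ∈ e, v ∈ S} with hMdef
  have hM : IsMatchingSet G (M : Set (Sym2 V)) := by
    refine ⟨fun e he => (Finset.mem_filter.1 he).2.1, fun e he f hf hne v ⟨hve, hvf⟩ => hne ?_⟩
    obtain ⟨x, rfl⟩ := hve
    obtain ⟨y, rfl⟩ := hvf
    simp only [hMdef, Finset.coe_filter, Finset.mem_univ, true_and, Set.mem_ofPred_eq,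
      mem_edgeSet, Sym2.mem_iff, forall_eq_or_imp, forall_eq] at he hf
    rw [(hS v he.2.1).unique ⟨he.1, he.2.2⟩ ⟨hf.1, hf.2.2⟩]
  have hcover : S.toFinset ⊆ M.biUnion Sym2.toFinset := fun v hv => by
    rw [Set.mem_toFinset] at hv
    obtain ⟨w, ⟨hadj, hw⟩, -⟩ := hS v hv
    exact Finset.mem_biUnion.2 ⟨s(v, w), by simp [hMdef, hadj, hv, hw], by simp⟩
  calc S.ncard = S.toFinset.card := Set.ncard_eq_toFinset_card' S
    _ ≤ (M.biUnion Sym2.toFinset).card := Finset.card_le_card hcover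
    _ ≤ M.card * 2 := Finset.card_biUnion_le_card_mul _ _ _ fun e _ => by
        rw [Sym2.card_toFinset]; split_ifs <;> simp
    _ ≤ 2 * matchingNumber G := by
        have := hM.ncard_le_matchingNumber
        rw [Set.ncard_coe_finset] at this
        lia

end Matching

section KLevelDegree

theorem multiset_map_eq_map_of_map_eq_map {α β γ δ : Type*} {s : Multiset α} {t : Multiset β}
    {c : α → γ} {c' : β → γ} {f : α → δ} {f' : β → δ} (hc : s.map c = t.map c')
    (hf : ∀ a ∈ s, ∀ b ∈ t, c a = c' b → f a = f' b) : s.map f = t.map f' :=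
  Multiset.rel_eq.1 <| Multiset.rel_map.2 <|
    (Multiset.rel_map.1 (Multiset.rel_eq.2 hc)).mono hf

theorem eq_of_countP_le_eq {s t : Multiset ℕ}
    (h : ∀ a, s.countP (· ≤ a) = t.countP (· ≤ a)) : s = t := by
  have succ_count (u : Multiset ℕ) (a : ℕ) :
      u.countP (· ≤ a + 1) = u.countP (· ≤ a) + u.count (a + 1) := by
    induction u using Multiset.induction_on with
    | empty => simp
    | cons b u ih => simp only [Multiset.countP_cons, Multiset.count_cons, ih]; grind
  ext a
  cases a with
  | zero => simpa [Multiset.count, eq_comm] using h 0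
  | succ a => have := h (a + 1); simp only [succ_count, h a] at this; lia

variable {V W : Type*} [Fintype V] [Fintype W] {G : SimpleGraph V} {H : SimpleGraph W}
  {v : V} {w : W}

theorem kdeg_zero_eq_iff [Fintype (G.neighborSet v)] [Fintype (H.neighborSet w)] :
    kdeg G 0 v = kdeg H 0 w ↔ G.degree v = H.degree w := by
  change (G.neighborSet v).ncard = (H.neighborSet w).ncard ↔ _
  rw [Set.ncard_eq_toFinset_card', Set.ncard_eq_toFinset_card']
  rfl

theorem kdeg_succ_eq_iff [Fintype (G.neighborSet v)] [Fintype (H.neighborSet w)] {t : ℕ} :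
    kdeg G (t + 1) v = kdeg H (t + 1) w ↔
      (G.neighborFinset v).val.map (kdeg G t) = (H.neighborFinset w).val.map (kdeg H t) := by
  change (G.neighborSet v).toFinite.toFinset.val.map _ =
    (H.neighborSet w).toFinite.toFinset.val.map _ ↔ _
  rw [Set.toFinite_toFinset, Set.toFinite_toFinset]
  rfl

theorem kdeg_congr (φ : G ≃g H) (t : ℕ) (v : V) : kdeg G t v = kdeg H t (φ v) := by
  classical
  induction t generalizing v with
  | zero => exact kdeg_zero_eq_iff.2 (φ.degree_eq v).symm
  | succ t ih =>
    have neighbors : (H.neighborFinset (φ v)).val = (G.neighborFinset v).val.map φ := by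
      have h : H.neighborFinset (φ v) = (G.neighborFinset v).map φ.toEquiv.toEmbedding := by
        ext w
        obtain ⟨x, rfl⟩ := φ.surjective w
        rw [mem_neighborFinset, φ.map_adj_iff, ← mem_neighborFinset]
        exact (Finset.mem_map' φ.toEquiv.toEmbedding).symm
      rw [h]
      rfl
    rw [kdeg_succ_eq_iff, neighbors, Multiset.map_map]
    exact Multiset.map_congr rfl fun x _ => ih x

end KLevelDegree

section Levels

/-- Number of neighbours of `v` of level at most `a`, for an assignment `lev` of levels to the
vertices. -/
noncomputable def levelDegree {V : Type*} (G : SimpleGraph V) (lev : V → ℕ) (v : V)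
    (a : ℕ) : ℕ :=
  {w | G.Adj v w ∧ lev w ≤ a}.ncard

/-- The graph `G` with levels `lev` has level profile `D` when every vertex of level `l` has exactly
`D l a` neighbours of level at most `a`. The range `1 ≤ a` leaves open whether a neighbour has level
`0` or `1`, and this is where the two graphs of the construction differ. -/
def HasLevelProfile {V : Type*} (G : SimpleGraph V) (lev : V → ℕ)
    (D : ℕ → ℕ → ℕ) : Prop :=
  ∀ v a, 1 ≤ a → levelDegree G lev v a = D (lev v) a

/-- A profile is flat below `k` when vertices of levels `l, l' < k` have equally many neighbours of
level at most `a` as soon as `a` exceeds both `l` and `l'`. -/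
def IsFlatBelow (k : ℕ) (D : ℕ → ℕ → ℕ) : Prop :=
  ∀ l l' a, l < min a k → l' < min a k → D l a = D l' a

variable {V W : Type*} {G : SimpleGraph V} {H : SimpleGraph W}
  {lev : V → ℕ} {lev' : W → ℕ} {D : ℕ → ℕ → ℕ} {k : ℕ}

theorem countP_max_level (G : SimpleGraph V) (lev : V → ℕ) (m : ℕ) (v : V)
    [Fintype (G.neighborSet v)] (a : ℕ) :
    ((G.neighborFinset v).val.map (fun x => max (lev x) m)).countP (· ≤ a) =
      if m ≤ a then levelDegree G lev v a else 0 := by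
  rw [Multiset.countP_map, ← Finset.filter_val, Finset.card_val, levelDegree,
    ← Set.ncard_coe_finset]
  split_ifs with h
  · congr 1; ext; simp [h]
  · simp [h]

theorem HasLevelProfile.map_max_level_eq (hG : HasLevelProfile G lev D)
    (hH : HasLevelProfile H lev' D) {m : ℕ} (hm : 1 ≤ m) {v : V} {w : W}
    [Fintype (G.neighborSet v)] [Fintype (H.neighborSet w)]
    (h : ∀ a, m ≤ a → D (lev v) a = D (lev' w) a) :
    (G.neighborFinset v).val.map (fun x => max (lev x) m) =
      (H.neighborFinset w).val.map (fun y => max (lev' y) m) := by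
  refine eq_of_countP_le_eq fun a => ?_
  rw [countP_max_level, countP_max_level]
  split_ifs with ha
  · rw [hG v a (hm.trans ha), hH w a (hm.trans ha), h a ha]
  · rfl

theorem IsFlatBelow.exists_threshold (hD : IsFlatBelow k D) {t l l' : ℕ} (ht : t < k)
    (h : l = l' ∨ max l l' + t < k) : ∃ m, 1 ≤ m ∧ m + t ≤ k ∧ ∀ a, m ≤ a → D l a = D l' a := by
  rcases h with rfl | h
  · exact ⟨1, le_rfl, by lia, fun _ _ => rfl⟩
  · exact ⟨max l l' + 1, by lia, by lia, fun a ha => hD l l' a (by lia) (by lia)⟩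

theorem HasLevelProfile.kdeg_eq [Fintype V] [Fintype W] (hG : HasLevelProfile G lev D)
    (hH : HasLevelProfile H lev' D) (hD : IsFlatBelow k D) {t : ℕ} {v : V} {w : W} (ht : t < k)
    (h : lev v = lev' w ∨ max (lev v) (lev' w) + t < k) : kdeg G t v = kdeg H t w := by
  classical
  induction t generalizing v w with
  | zero =>
    obtain ⟨m, hm, -, hDm⟩ := hD.exists_threshold ht h
    simpa [kdeg_zero_eq_iff] using congrArg Multiset.card (hG.map_max_level_eq hH hm hDm)
  | succ t ih =>
    obtain ⟨m, hm, hmt, hDm⟩ := hD.exists_threshold ht h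
    rw [kdeg_succ_eq_iff]
    refine multiset_map_eq_map_of_map_eq_map (hG.map_max_level_eq hH hm hDm) fun x _ y _ hxy => ?_
    exact ih (by lia) (by lia)

end Levels

section JoinCopies

/-- Disjoint copies of `G` indexed by `ι`, and an independent set `κ` of new vertices, each joined
to all vertices of `S` in all the copies. -/
def joinCopies {V : Type*} (G : SimpleGraph V) (S : Set V) (ι κ : Type*) :
    SimpleGraph (ι × V ⊕ κ) where
  Adj
    | .inl p, .inl q => p.1 = q.1 ∧ G.Adj p.2 q.2
    | .inl p, .inr _ => p.2 ∈ S
    | .inr _, .inl q => q.2 ∈ S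
    | .inr _, .inr _ => False
  symm := ⟨by
    rintro (p | _) (q | _) h
    exacts [⟨h.1.symm, h.2.symm⟩, h, h, h]⟩
  loopless := ⟨by
    rintro (p | _) h
    exacts [h.2.ne rfl, h]⟩

/-- The levels on the vertices of `joinCopies`: inherited from `lev` on the copies, and equal to
`L` on the new vertices. -/
def joinLevel {V : Type*} (lev : V → ℕ) (L : ℕ) (ι κ : Type*) : ι × V ⊕ κ → ℕ :=
  Sum.elim (fun p => lev p.2) fun _ => L

variable {V ι κ : Type*} {G : SimpleGraph V} {lev : V → ℕ} {S : Set V}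
  {L a : ℕ}

@[simp]
theorem joinCopies_adj_inl_inl {p q : ι × V} :
    (joinCopies G S ι κ).Adj (.inl p) (.inl q) ↔ p.1 = q.1 ∧ G.Adj p.2 q.2 :=
  Iff.rfl

@[simp]
theorem joinCopies_adj_inl_inr {p : ι × V} {j : κ} :
    (joinCopies G S ι κ).Adj (.inl p) (.inr j) ↔ p.2 ∈ S :=
  Iff.rfl

@[simp]
theorem joinCopies_adj_inr_inl {p : ι × V} {j : κ} :
    (joinCopies G S ι κ).Adj (.inr j) (.inl p) ↔ p.2 ∈ S :=
  Iff.rfl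

@[simp]
theorem joinCopies_adj_inr_inr {i j : κ} :
    ¬(joinCopies G S ι κ).Adj (.inr i) (.inr j) :=
  id

@[simp]
theorem joinLevel_inl {p : ι × V} : joinLevel lev L ι κ (.inl p) = lev p.2 :=
  rfl

@[simp]
theorem joinLevel_inr {j : κ} : joinLevel lev L ι κ (.inr j) = L :=
  rfl

theorem ncard_setOf_sum {α β : Type*} [Finite α] [Finite β] (P : α ⊕ β → Prop) :
    {x | P x}.ncard = {a | P (.inl a)}.ncard + {b | P (.inr b)}.ncard := by
  have h : {x | P x} = Sum.inl '' {a | P (.inl a)} ∪ Sum.inr '' {b | P (.inr b)} := by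
    ext (a | b) <;> simp
  rw [h, Set.ncard_union_eq (by simp [Set.disjoint_left]),
    Set.ncard_image_of_injective _ Sum.inl_injective,
    Set.ncard_image_of_injective _ Sum.inr_injective]

theorem ncard_setOf_snd (P : V → Prop) :
    {p : ι × V | P p.2}.ncard = Nat.card ι * {v | P v}.ncard := by
  have h : {p : ι × V | P p.2} = Set.univ ×ˢ {v | P v} := by ext; simp
  rw [h, Set.ncard_prod, Set.ncard_univ]

variable [Finite V] [Finite ι] [Finite κ]

theorem ncard_joinLevel (P : ℕ → Prop) [Decidable (P L)] :
    {x | P (joinLevel lev L ι κ x)}.ncard =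
      Nat.card ι * {v | P (lev v)}.ncard + if P L then Nat.card κ else 0 := by
  rw [ncard_setOf_sum]
  congr 1
  · exact ncard_setOf_snd fun v => P (lev v)
  · split_ifs with h <;> simp [h]

theorem levelDegree_joinCopies_inl (p : ι × V) [Decidable (p.2 ∈ S ∧ L ≤ a)] :
    levelDegree (joinCopies G S ι κ) (joinLevel lev L ι κ) (.inl p) a =
      levelDegree G lev p.2 a + if p.2 ∈ S ∧ L ≤ a then Nat.card κ else 0 := by
  rw [levelDegree, ncard_setOf_sum]
  congr 1
  · have h : {q : ι × V | (joinCopies G S ι κ).Adj (.inl p) (.inl q) ∧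
        joinLevel lev L ι κ (.inl q) ≤ a} = {p.1} ×ˢ {v | G.Adj p.2 v ∧ lev v ≤ a} := by
      ext; simp [eq_comm, and_assoc]
    rw [h, Set.ncard_prod, Set.ncard_singleton, one_mul, levelDegree]
  · split_ifs with h <;> simp [h]

theorem levelDegree_joinCopies_inr (j : κ) :
    levelDegree (joinCopies G S ι κ) (joinLevel lev L ι κ) (.inr j) a =
      Nat.card ι * {v | v ∈ S ∧ lev v ≤ a}.ncard := by
  rw [levelDegree, ncard_setOf_sum]
  simpa using ncard_setOf_snd (ι := ι) fun v => v ∈ S ∧ lev v ≤ a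

end JoinCopies

section GapSystem

/-- Two graphs `G`, `H` on the same vertices, with levels at most `k` and a common profile that is
flat below `k`, and hence with equal `k`-level degrees. The level `0` vertices are perfectly matched
among themselves in `G`, are independent in `H`, and outnumber all others by a factor of more than
`R`. -/
structure IsGapSystem (R k : ℕ) {V : Type*} (lev : V → ℕ) (G H : SimpleGraph V)
    (D : ℕ → ℕ → ℕ) : Prop where
  level_le : ∀ v, lev v ≤ k
  profile_left : HasLevelProfile G lev D
  profile_right : HasLevelProfile H lev D
  flat : IsFlatBelow k D
  degree_pos : 0 < D 0 k
  degree_le : D 0 k ≤ D k k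
  existsUnique_adj : ∀ v ∈ {v | lev v = 0}, ∃! w, G.Adj v w ∧ w ∈ {w | lev w = 0}
  isVertexCover : H.IsVertexCover {v | lev v ≠ 0}
  ratio_lt : R * {v | lev v ≠ 0}.ncard < {v | lev v = 0}.ncard

variable {V ι κ : Type*} {G H : SimpleGraph V} {lev : V → ℕ} {D : ℕ → ℕ → ℕ} {R k : ℕ}

theorem IsGapSystem.exists_level_eq_zero (h : IsGapSystem R k lev G H D) : ∃ v, lev v = 0 :=
  Set.nonempty_of_ncard_ne_zero (Nat.ne_zero_of_lt h.ratio_lt)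

theorem IsGapSystem.one_le_matchingNumber_right [Finite V] (h : IsGapSystem R k lev G H D)
    (hk : 1 ≤ k) : 1 ≤ matchingNumber H := by
  obtain ⟨v, hv⟩ := h.exists_level_eq_zero
  have hdeg : levelDegree H lev v k ≠ 0 := by
    rw [h.profile_right v k hk, hv]
    exact h.degree_pos.ne'
  obtain ⟨w, hw, -⟩ := Set.nonempty_of_ncard_ne_zero hdeg
  exact one_le_matchingNumber hw

theorem IsGapSystem.mul_matchingNumber_le [Finite V] (h : IsGapSystem R k lev G H D) :
    R * matchingNumber H ≤ 2 * matchingNumber G :=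
  calc R * matchingNumber H
    _ ≤ R * {v | lev v ≠ 0}.ncard := Nat.mul_le_mul_left R <| matchingNumber_le fun _ hM =>
        hM.ncard_le_of_isVertexCover h.isVertexCover (Set.toFinite _)
    _ ≤ {v | lev v = 0}.ncard := h.ratio_lt.le
    _ ≤ 2 * matchingNumber G := ncard_le_two_mul_matchingNumber h.existsUnique_adj

/-- The profile of `joinCopies G {v | lev v < k} ι κ` when `G` has profile `D` and `c` is the number
of copies. The value `D k k` for `a > k` reflects the choice of `|κ|`, which raises the degrees of
the vertices of level below `k` to the degree `D k k` of those of level `k`. -/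
noncomputable def joinProfile (D : ℕ → ℕ → ℕ) (lev : V → ℕ) (k c : ℕ) (l a : ℕ) : ℕ :=
  if k < l then c * {v | lev v < k ∧ lev v ≤ a}.ncard else if k < a then D k k else D l a

theorem IsFlatBelow.joinProfile (hD : IsFlatBelow k D) (c : ℕ) :
    IsFlatBelow (k + 1) (joinProfile D lev k c) := by
  intro l l' a hl hl'
  have hkl : ¬k < l := by lia
  have hkl' : ¬k < l' := by lia
  simp only [_root_.joinProfile, hkl, hkl', if_false]
  split_ifs with ha
  · rfl
  · exact hD l l' a (by lia) (by lia)

theorem levelDegree_eq_of_level_le {G : SimpleGraph V} (hlev : ∀ v, lev v ≤ k) {a : ℕ}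
    (ha : k ≤ a) (v : V) : levelDegree G lev v a = levelDegree G lev v k := by
  simp only [levelDegree, (hlev _).trans ha, hlev]

theorem HasLevelProfile.joinCopies [Finite V] [Finite ι] [Finite κ]
    (hG : HasLevelProfile G lev D) (hD : IsFlatBelow k D) (hlev : ∀ v, lev v ≤ k) (hk : 1 ≤ k)
    (hκ : D 0 k + Nat.card κ = D k k) :
    HasLevelProfile (joinCopies G {v | lev v < k} ι κ) (joinLevel lev (k + 1) ι κ)
      (joinProfile D lev k (Nat.card ι)) := by
  classical
  rintro (p | j) a ha
  · have hp := hlev p.2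
    rw [levelDegree_joinCopies_inl, joinLevel_inl, joinProfile, if_neg hp.not_gt]
    split_ifs with h hka hka
    · rw [levelDegree_eq_of_level_le hlev hka.le, hG _ k hk,
        hD _ 0 k (lt_min h.1 h.1) (lt_min hk hk), hκ]
    · lia
    · have hpk : lev p.2 = k := hp.antisymm (not_lt.1 fun hlt => h ⟨hlt, hka⟩)
      rw [levelDegree_eq_of_level_le hlev hka.le, hG _ k hk, hpk, add_zero]
    · rw [hG _ a ha, add_zero]
  · rw [levelDegree_joinCopies_inr, joinLevel_inr, joinProfile, if_pos k.lt_succ_self]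
    rfl

theorem existsUnique_adj_joinCopies {S : Set V} {L : ℕ} (hL : L ≠ 0)
    (h : ∀ v ∈ {v | lev v = 0}, ∃! w, G.Adj v w ∧ w ∈ {w | lev w = 0}) :
    ∀ x ∈ {x | joinLevel lev L ι κ x = 0},
      ∃! y, (joinCopies G S ι κ).Adj x y ∧ y ∈ {y | joinLevel lev L ι κ y = 0} := by
  rintro (⟨i, v⟩ | _) hx
  · obtain ⟨w, ⟨hvw, hw⟩, huniq⟩ := h v hx
    refine ⟨.inl (i, w), ⟨⟨rfl, hvw⟩, hw⟩, ?_⟩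
    rintro (⟨i', w'⟩ | _) ⟨hadj, hlev⟩
    · obtain ⟨rfl, hadj⟩ : i = i' ∧ G.Adj v w' := hadj
      rw [huniq w' ⟨hadj, hlev⟩]
    · exact absurd hlev hL
  · exact absurd hx hL

theorem isVertexCover_joinCopies {S : Set V} {L : ℕ} (hL : L ≠ 0)
    (h : H.IsVertexCover {v | lev v ≠ 0}) :
    (joinCopies H S ι κ).IsVertexCover {x | joinLevel lev L ι κ x ≠ 0} := by
  rintro (p | i) (q | j) hadj
  · exact h hadj.2
  · exact .inr hL
  · exact .inl hL
  · exact hadj.elim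

theorem IsGapSystem.joinCopies [Finite V] [Finite ι] [Finite κ]
    (h : IsGapSystem R k lev G H D) (hk : 1 ≤ k) (hκ : D 0 k + Nat.card κ = D k k)
    (hι : D k k + R * Nat.card κ + 1 ≤ Nat.card ι) :
    IsGapSystem R (k + 1) (joinLevel lev (k + 1) ι κ) (joinCopies G {v | lev v < k} ι κ)
      (joinCopies H {v | lev v < k} ι κ) (joinProfile D lev k (Nat.card ι)) where
  level_le := by
    rintro (p | j)
    exacts [(h.level_le p.2).trans k.le_succ, le_rfl]
  profile_left := h.profile_left.joinCopies h.flat h.level_le hk hκ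
  profile_right := h.profile_right.joinCopies h.flat h.level_le hk hκ
  flat := h.flat.joinProfile _
  degree_pos := by simpa [joinProfile] using h.degree_pos.trans_le h.degree_le
  degree_le := by
    obtain ⟨v, hv⟩ := h.exists_level_eq_zero
    have hpos : 0 < {v | lev v < k ∧ lev v ≤ k + 1}.ncard :=
      (Set.ncard_pos).2 ⟨v, by simp [hv]; lia⟩
    simp only [joinProfile, k.not_lt_zero, k.lt_succ_self, if_true, if_false]
    exact (by lia : D k k ≤ Nat.card ι).trans (Nat.le_mul_of_pos_right _ hpos)
  existsUnique_adj := existsUnique_adj_joinCopies k.succ_ne_zero h.existsUnique_adj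
  isVertexCover := isVertexCover_joinCopies k.succ_ne_zero h.isVertexCover
  ratio_lt := by
    rw [ncard_joinLevel (· ≠ 0), ncard_joinLevel (· = 0), if_pos k.succ_ne_zero,
      if_neg k.succ_ne_zero]
    have hcopies := Nat.mul_le_mul_left (Nat.card ι) (Nat.succ_le_of_lt h.ratio_lt)
    linarith

end GapSystem

section BaseSystem

/-- A complete bipartite graph on the vertices `(β, i, none)`, with the sides given by `β`, together
with disjoint edges joining `(false, i, some j)` to `(true, i, some j)`. -/
def bicliqueWithEdges (α : Type*) : SimpleGraph (Bool × α × Option α) where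
  Adj x y := x.1 ≠ y.1 ∧ (x.2 = y.2 ∨ x.2.2 = none ∧ y.2.2 = none)
  symm := ⟨fun _ _ h => ⟨h.1.symm, h.2.imp Eq.symm And.symm⟩⟩
  loopless := ⟨fun _ h => h.1 rfl⟩

/-- Disjoint stars with centres `(β, i, none)` and leaves `(β, i, some j)`. -/
def disjointStars (α : Type*) : SimpleGraph (Bool × α × Option α) where
  Adj x y := x.1 = y.1 ∧ x.2.1 = y.2.1 ∧ ¬(x.2.2 = none ↔ y.2.2 = none)
  symm := ⟨fun _ _ h => ⟨h.1.symm, h.2.1.symm, fun e => h.2.2 e.symm⟩⟩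
  loopless := ⟨fun _ h => h.2.2 Iff.rfl⟩

/-- Level `1` for the vertices `(β, i, none)`, level `0` for the other ones. -/
def baseLevel {α : Type*} (x : Bool × α × Option α) : ℕ :=
  x.2.2.elim 1 fun _ => 0

variable {α : Type*}

theorem baseLevel_le_one (x : Bool × α × Option α) : baseLevel x ≤ 1 := by
  obtain ⟨_, _, _ | _⟩ := x <;> simp [baseLevel]

theorem levelDegree_baseLevel (G : SimpleGraph (Bool × α × Option α)) {a : ℕ} (ha : 1 ≤ a)
    (x : Bool × α × Option α) : levelDegree G baseLevel x a = (G.neighborSet x).ncard := by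
  simp only [levelDegree, (baseLevel_le_one _).trans ha, and_true, neighborSet]

theorem hasLevelProfile_bicliqueWithEdges :
    HasLevelProfile (bicliqueWithEdges α) baseLevel fun l _ => if l = 0 then 1 else Nat.card α := by
  rintro ⟨β, i, _ | j⟩ a ha <;> rw [levelDegree_baseLevel _ ha]
  · have h : (bicliqueWithEdges α).neighborSet (β, i, none) =
        Set.range fun i' : α => (!β, i', (none : Option α)) := by
      ext ⟨β', i', _ | j'⟩ <;> cases β <;> cases β' <;> simp [bicliqueWithEdges, eq_comm]
    rw [h, ← Set.image_univ, Set.ncard_image_of_injective _ (fun _ _ h => by simpa using h),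
      Set.ncard_univ]
    rfl
  · have h : (bicliqueWithEdges α).neighborSet (β, i, some j) = {(!β, i, some j)} := by
      ext ⟨β', i', _ | j'⟩ <;> cases β <;> cases β' <;> simp [bicliqueWithEdges, eq_comm]
    rw [h, Set.ncard_singleton]
    rfl

theorem hasLevelProfile_disjointStars :
    HasLevelProfile (disjointStars α) baseLevel fun l _ => if l = 0 then 1 else Nat.card α := by
  rintro ⟨β, i, _ | j⟩ a ha <;> rw [levelDegree_baseLevel _ ha]
  · have h : (disjointStars α).neighborSet (β, i, none) =
        Set.range fun j : α => (β, i, some j) := by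
      ext ⟨β', i', _ | j'⟩ <;> simp [disjointStars]
    rw [h, ← Set.image_univ, Set.ncard_image_of_injective _ (fun _ _ h => by simpa using h),
      Set.ncard_univ]
    rfl
  · have h : (disjointStars α).neighborSet (β, i, some j) = {(β, i, none)} := by
      ext ⟨β', i', _ | j'⟩ <;> simp [disjointStars, eq_comm]
    rw [h, Set.ncard_singleton]
    rfl

theorem ncard_baseLevel_eq_zero :
    {x : Bool × α × Option α | baseLevel x = 0}.ncard = 2 * (Nat.card α * Nat.card α) := by
  have h : {x : Bool × α × Option α | baseLevel x = 0} =
      Set.univ ×ˢ Set.univ ×ˢ (some '' Set.univ) := by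
    ext ⟨β, i, _ | j⟩ <;> simp [baseLevel]
  rw [h, Set.ncard_prod, Set.ncard_prod,
    Set.ncard_image_of_injective _ (Option.some_injective α)]
  simp [Set.ncard_univ]

theorem ncard_baseLevel_ne_zero :
    {x : Bool × α × Option α | baseLevel x ≠ 0}.ncard = 2 * Nat.card α := by
  have h : {x : Bool × α × Option α | baseLevel x ≠ 0} = Set.univ ×ˢ Set.univ ×ˢ {none} := by
    ext ⟨β, i, _ | j⟩ <;> simp [baseLevel]
  simp [h, Set.ncard_prod, Set.ncard_univ]

theorem isGapSystem_base {R : ℕ} (hR : R < Nat.card α) :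
    IsGapSystem R 1 baseLevel (bicliqueWithEdges α) (disjointStars α)
      fun l _ => if l = 0 then 1 else Nat.card α where
  level_le := baseLevel_le_one
  profile_left := hasLevelProfile_bicliqueWithEdges
  profile_right := hasLevelProfile_disjointStars
  flat l l' a hl hl' := by
    obtain rfl : l = 0 := by lia
    obtain rfl : l' = 0 := by lia
    rfl
  degree_pos := Nat.one_pos
  degree_le := by simpa using Nat.one_le_of_lt hR
  existsUnique_adj := by
    rintro ⟨β, i, _ | j⟩ hx
    · cases hx
    · refine ⟨(!β, i, some j), by simp [bicliqueWithEdges, baseLevel], ?_⟩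
      rintro ⟨β', i', _ | j'⟩ <;> simp +contextual [bicliqueWithEdges, baseLevel, ← Bool.eq_not]
  isVertexCover := by
    rintro ⟨_, _, _ | _⟩ ⟨_, _, _ | _⟩ hadj <;> simp_all [disjointStars, baseLevel]
  ratio_lt := by
    rw [ncard_baseLevel_eq_zero, ncard_baseLevel_ne_zero]
    nlinarith

theorem exists_isGapSystem (R : ℕ) {k : ℕ} (hk : 1 ≤ k) :
    ∃ (V : Type) (_ : Fintype V) (lev : V → ℕ) (G H : SimpleGraph V) (D : ℕ → ℕ → ℕ),
      IsGapSystem R k lev G H D := by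
  induction k, hk using Nat.le_induction with
  | base => exact ⟨_, inferInstance, _, _, _, _, isGapSystem_base (α := Fin (R + 1)) (by simp)⟩
  | succ k hk ih =>
    obtain ⟨V, _, lev, G, H, D, h⟩ := ih
    have hD := h.degree_le
    exact ⟨_, inferInstance, _, _, _, _, h.joinCopies (κ := Fin (D k k - D 0 k))
      (ι := Fin (D k k + R * (D k k - D 0 k) + 1)) hk (by simp; lia) (by simp)⟩

end BaseSystem

theorem identical_kLevelDegrees_matching_gap_general (k : ℕ) (r : ℝ) :
    ∃ (n : ℕ) (G H : SimpleGraph (Fin n)), (∀ v, kdeg G k v = kdeg H k v) ∧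
      1 ≤ matchingNumber H ∧ r * matchingNumber H ≤ matchingNumber G := by
  obtain ⟨V, _, lev, G, H, D, h⟩ := exists_isGapSystem (2 * ⌈r⌉₊) k.succ_pos
  let e := Fintype.equivFin V
  refine ⟨_, G.map e, H.map e, fun v => ?_, ?_, ?_⟩
  · obtain ⟨v, rfl⟩ := e.surjective v
    calc kdeg (G.map e) k (e v) = kdeg G k v := (kdeg_congr (Iso.map e G) k v).symm
      _ = kdeg H k v := h.profile_left.kdeg_eq h.profile_right h.flat k.lt_succ_self (.inl rfl)
      _ = kdeg (H.map e) k (e v) := kdeg_congr (Iso.map e H) k v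
  · rw [← matchingNumber_congr (Iso.map e H)]
    exact h.one_le_matchingNumber_right k.succ_pos
  · rw [← matchingNumber_congr (Iso.map e G), ← matchingNumber_congr (Iso.map e H)]
    have hmul : ⌈r⌉₊ * matchingNumber H ≤ matchingNumber G := by
      linarith [h.mul_matchingNumber_le]
    calc r * matchingNumber H ≤ ⌈r⌉₊ * matchingNumber H := by gcongr; exact Nat.le_ceil r
      _ ≤ matchingNumber G := by exact_mod_cast hmul

/-- For all integers `k ≥ 1` and `c ≥ 2k`, there exist finite simple graphs
`G` and `H` and a bijection `Φ` of their vertex sets preserving `k`-level degrees, while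
`ν(H) ≥ 1` and `ν(G) ≥ ((c+1)/(4k))·ν(H)`. -/
theorem identical_kLevelDegrees_matching_gap (k c : ℕ) (hk : 1 ≤ k) (hc : 2 * k ≤ c) :
    ∃ (n m : ℕ) (G : SimpleGraph (Fin n)) (H : SimpleGraph (Fin m)) (Φ : Fin n ≃ Fin m),
      (∀ v : Fin n, kdeg G (k - 1) v = kdeg H (k - 1) (Φ v)) ∧
      1 ≤ matchingNumber H ∧
      ((c : ℝ) + 1) / (4 * (k : ℝ)) * (matchingNumber H : ℝ) ≤ (matchingNumber G : ℝ) := by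
  obtain ⟨n, G, H, hGH⟩ :=
    identical_kLevelDegrees_matching_gap_general (k - 1) (((c : ℝ) + 1) / (4 * (k : ℝ)))
  exact ⟨n, n, G, H, Equiv.refl _, hGH⟩
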